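/- Let d ≥ 2 be an integer and let V be partitioned into nonempty sets R_1,…,R_d, B_1,…,B_d. Define a 2-coloring c of the complete digraph on V as follows: every edge (x,y) with x,y both in the same R_i is red; every edge with x,y both in the same B_i is blue; every edge from a vertex of R_i to a vertex of B_j (any i,j) is red; every edge from a vertex of B_i to a vertex of R_j (any i,j) is blue; every edge from R_i to R_j with i ≠ j is blue; every edge from B_i to B_j with i ≠ j is red. Then for every set U ⊆ V and color j ∈ {red, blue} such that for every finite S ⊆ U with 1 ≤ |S| ≤ d there exists w ∈ U with c(s,w) = j for all s ∈ S (i.e., U is the vertex set of a monochromatic d-dominating subgraph), U is entirely contained in one of the sets R_1,…,R_d, B_1,…,B_d. -/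

import Mathlib

/-- The two colors for 2-colorings of complete digraphs. -/
inductive Color where
  | red : Color
  | blue : Color

/-- `U`, together with the color `j`, is the vertex set of a monochromatic `d`-dominating
subgraph of the complete digraph on `V` 2-colored by `c`. -/
def IsMonoDom {V : Type*} (c : V → V → Color) (d : ℕ) (j : Color) (U : Set V) : Prop :=
  ∀ S : Finset V, ↑S ⊆ U → S.Nonempty → S.card ≤ d →
    ∃ w ∈ U, ∀ s ∈ S, c s w = j

/-!
Edges leaving a blue part are red only when they end in another blue part. So if a set `U` that is
`d`-dominating in red met some blue part, one could choose a vertex of `U` in each of the at most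
`d` blue parts that `U` meets; their common red out-neighbour in `U` would have to lie in a blue
part, but then the vertex chosen in that very part sends it a blue edge. Hence `U` lies in the red
parts. As no red edge joins different red parts, the common out-neighbour of any two vertices of
`U` puts them in the same part. The other case is symmetric.
-/

/-- The digraph with edge relation `r`, restricted to `U`, is `d`-dominating. This is `IsMonoDom`
for a bare relation, applied below to the edges of a single color. -/
def IsDominatingOn {V : Type*} (r : V → V → Prop) (d : ℕ) (U : Set V) : Prop :=
  ∀ S : Finset V, ↑S ⊆ U → S.Nonempty → S.card ≤ d → ∃ w ∈ U, ∀ s ∈ S, r s w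

theorem isMonoDom_iff_isDominatingOn {V : Type*} {c : V → V → Color} {d : ℕ} {j : Color}
    {U : Set V} : IsMonoDom c d j U ↔ IsDominatingOn (c · · = j) d U :=
  Iff.rfl

namespace IsDominatingOn

variable {V ι κ : Type*} {r : V → V → Prop} {d : ℕ} {U : Set V}

theorem exists_forall_rel [Finite κ] [Nonempty κ] (hU : IsDominatingOn r d U)
    (hκ : Nat.card κ ≤ d) {f : κ → V} (hf : ∀ k, f k ∈ U) : ∃ w ∈ U, ∀ k, r (f k) w := by
  classical
  have := Fintype.ofFinite κ
  have hcard : (Finset.univ.image f).card ≤ d :=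
    Finset.card_image_le.trans (by rwa [Finset.card_univ, ← Nat.card_eq_fintype_card])
  have hsub : ↑(Finset.univ.image f) ⊆ U := by simpa [Set.range_subset_iff] using hf
  obtain ⟨w, hwU, hw⟩ := hU _ hsub (Finset.univ_nonempty.image f) hcard
  exact ⟨w, hwU, fun k => hw _ (Finset.mem_image_of_mem f (Finset.mem_univ k))⟩

theorem exists_rel_rel (hU : IsDominatingOn r d U) (hd : 2 ≤ d) {x y : V} (hx : x ∈ U)
    (hy : y ∈ U) : ∃ w ∈ U, r x w ∧ r y w := by
  obtain ⟨w, hwU, hw⟩ := hU.exists_forall_rel (f := ![x, y]) (by simpa using hd)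
    (Fin.forall_fin_two.2 ⟨hx, hy⟩)
  exact ⟨w, hwU, hw 0, hw 1⟩

theorem disjoint_iUnion [Finite κ] (hU : IsDominatingOn r d U) (hκ : Nat.card κ ≤ d)
    {Q : κ → Set V} (hin : ∀ k, ∀ x ∈ Q k, ∀ y ∈ Q k, ¬r x y)
    (hout : ∀ k, ∀ x ∈ Q k, ∀ y ∉ ⋃ l, Q l, ¬r x y) : Disjoint U (⋃ k, Q k) := by
  refine Set.disjoint_left.2 fun v hvU hvQ => ?_
  obtain ⟨i, hvi⟩ := Set.mem_iUnion.1 hvQ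
  have : Nonempty {k // (U ∩ Q k).Nonempty} := ⟨⟨i, v, hvU, hvi⟩⟩
  choose f hfU hfQ using fun k : {k // (U ∩ Q k).Nonempty} => k.2
  obtain ⟨w, hwU, hw⟩ := hU.exists_forall_rel ((Finite.card_subtype_le _).trans hκ) hfU
  by_cases hwQ : w ∈ ⋃ k, Q k
  · obtain ⟨k, hwk⟩ := Set.mem_iUnion.1 hwQ
    let m : {k // (U ∩ Q k).Nonempty} := ⟨k, w, hwU, hwk⟩
    exact hin k _ (hfQ m) w hwk (hw m)
  · let m : {k // (U ∩ Q k).Nonempty} := ⟨i, v, hvU, hvi⟩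
    exact hout i _ (hfQ m) w hwQ (hw m)

theorem exists_subset_of_subset_iUnion [Nonempty ι] (hU : IsDominatingOn r d U) (hd : 2 ≤ d)
    {P : ι → Set V} (hUP : U ⊆ ⋃ i, P i)
    (hcross : ∀ i j, i ≠ j → ∀ x ∈ P i, ∀ y ∈ P j, ¬r x y) : ∃ i, U ⊆ P i := by
  have index_eq {i j : ι} {x w : V} (hx : x ∈ P i) (hw : w ∈ P j) (hxw : r x w) : i = j :=
    by_contra fun hij => hcross i j hij x hx w hw hxw
  obtain rfl | ⟨x, hxU⟩ := U.eq_empty_or_nonempty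
  · exact ⟨Classical.arbitrary ι, Set.empty_subset _⟩
  obtain ⟨i, hxi⟩ := Set.mem_iUnion.1 (hUP hxU)
  refine ⟨i, fun y hyU => ?_⟩
  obtain ⟨j, hyj⟩ := Set.mem_iUnion.1 (hUP hyU)
  obtain ⟨w, hwU, hxw, hyw⟩ := hU.exists_rel_rel hd hxU hyU
  obtain ⟨k, hwk⟩ := Set.mem_iUnion.1 (hUP hwU)
  rwa [index_eq hxi hwk hxw, ← index_eq hyj hwk hyw]

theorem exists_subset_of_iUnion_union_iUnion_eq_univ [Nonempty ι] [Finite κ]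
    (hU : IsDominatingOn r d U) (hd : 2 ≤ d) (hκ : Nat.card κ ≤ d)
    {P : ι → Set V} {Q : κ → Set V} (hcover : (⋃ i, P i) ∪ (⋃ k, Q k) = Set.univ)
    (hQin : ∀ k, ∀ x ∈ Q k, ∀ y ∈ Q k, ¬r x y)
    (hQP : ∀ k i, ∀ x ∈ Q k, ∀ y ∈ P i, ¬r x y)
    (hPP : ∀ i j, i ≠ j → ∀ x ∈ P i, ∀ y ∈ P j, ¬r x y) : ∃ i, U ⊆ P i := by
  have mem_P_of_notMem_Q {y : V} (hy : y ∉ ⋃ k, Q k) : y ∈ ⋃ i, P i :=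
    (hcover.ge (Set.mem_univ y)).resolve_right hy
  have hUQ : Disjoint U (⋃ k, Q k) := hU.disjoint_iUnion hκ hQin fun k x hx y hy =>
    let ⟨i, hyi⟩ := Set.mem_iUnion.1 (mem_P_of_notMem_Q hy)
    hQP k i x hx y hyi
  exact hU.exists_subset_of_subset_iUnion hd
    (fun y hy => mem_P_of_notMem_Q (Set.disjoint_left.1 hUQ hy)) hPP

end IsDominatingOn

theorem mono_dom_contained_in_part_general {V ι κ : Type*} [Finite ι] [Nonempty ι] [Finite κ]
    [Nonempty κ] {d : ℕ} (hd : 2 ≤ d) (hι : Nat.card ι ≤ d) (hκ : Nat.card κ ≤ d)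
    {R : ι → Set V} {B : κ → Set V} (hcover : (⋃ i, R i) ∪ (⋃ k, B k) = Set.univ)
    {c : V → V → Color}
    (hcRin : ∀ i, ∀ x ∈ R i, ∀ y ∈ R i, c x y = Color.red)
    (hcBin : ∀ k, ∀ x ∈ B k, ∀ y ∈ B k, c x y = Color.blue)
    (hcRtoB : ∀ i k, ∀ x ∈ R i, ∀ y ∈ B k, c x y = Color.red)
    (hcBtoR : ∀ k i, ∀ x ∈ B k, ∀ y ∈ R i, c x y = Color.blue)
    (hcRtoR : ∀ i j, i ≠ j → ∀ x ∈ R i, ∀ y ∈ R j, c x y = Color.blue)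
    (hcBtoB : ∀ k l, k ≠ l → ∀ x ∈ B k, ∀ y ∈ B l, c x y = Color.red)
    {U : Set V} {j : Color} (hU : IsMonoDom c d j U) :
    (∃ i, U ⊆ R i) ∨ (∃ k, U ⊆ B k) := by
  rw [isMonoDom_iff_isDominatingOn] at hU
  cases j with
  | red =>
    exact .inl <| hU.exists_subset_of_iUnion_union_iUnion_eq_univ hd hκ hcover
      (fun k x hx y hy => by simp [hcBin k x hx y hy])
      (fun k i x hx y hy => by simp [hcBtoR k i x hx y hy])
      (fun i j hij x hx y hy => by simp [hcRtoR i j hij x hx y hy])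
  | blue =>
    exact .inr <| hU.exists_subset_of_iUnion_union_iUnion_eq_univ hd hι
      (by rwa [Set.union_comm])
      (fun i x hx y hy => by simp [hcRin i x hx y hy])
      (fun i k x hx y hy => by simp [hcRtoB i k x hx y hy])
      (fun k l hkl x hx y hy => by simp [hcBtoB k l hkl x hx y hy])

/-- Example (adapted from CDM): if `V` is partitioned into nonempty sets
`R 1, …, R d, B 1, …, B d` and colored as described, then every monochromatic
`d`-dominating subgraph is entirely contained in one of the parts. -/
theorem mono_dom_contained_in_part {V : Type*} (d : ℕ) (hd : 2 ≤ d)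
    (R B : Fin d → Set V)
    (hRne : ∀ i, (R i).Nonempty) (hBne : ∀ i, (B i).Nonempty)
    (hRR : ∀ i j : Fin d, i ≠ j → Disjoint (R i) (R j))
    (hBB : ∀ i j : Fin d, i ≠ j → Disjoint (B i) (B j))
    (hRB : ∀ i j : Fin d, Disjoint (R i) (B j))
    (hcover : (⋃ i, R i) ∪ (⋃ i, B i) = Set.univ)
    (c : V → V → Color)
    (hcRin : ∀ i : Fin d, ∀ x ∈ R i, ∀ y ∈ R i, c x y = Color.red)
    (hcBin : ∀ i : Fin d, ∀ x ∈ B i, ∀ y ∈ B i, c x y = Color.blue)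
    (hcRtoB : ∀ i j : Fin d, ∀ x ∈ R i, ∀ y ∈ B j, c x y = Color.red)
    (hcBtoR : ∀ i j : Fin d, ∀ x ∈ B i, ∀ y ∈ R j, c x y = Color.blue)
    (hcRtoR : ∀ i j : Fin d, i ≠ j → ∀ x ∈ R i, ∀ y ∈ R j, c x y = Color.blue)
    (hcBtoB : ∀ i j : Fin d, i ≠ j → ∀ x ∈ B i, ∀ y ∈ B j, c x y = Color.red) :
    ∀ (U : Set V) (jc : Color), IsMonoDom c d jc U →
      (∃ i, U ⊆ R i) ∨ (∃ i, U ⊆ B i) := by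
  have : NeZero d := ⟨by lia⟩
  intro U jc hU
  exact mono_dom_contained_in_part_general hd (Nat.card_fin d).le (Nat.card_fin d).le hcover
    hcRin hcBin hcRtoB hcBtoR hcRtoR hcBtoB hU
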